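/- arXiv:2005.08292 — 2 statements merged into one kernel-verified Lean document; each statement's English description precedes it below -/
import Mathlib

section
/- For every integer n ≥ 3, I(n) < I(n+1), where I(n) = (2√n/π) ∫₀^∞ ((sin t)/t)^n dt. -/
open MeasureTheory Real

/-- `I n = (2√n/π) ∫₀^∞ ((sin t)/t)^n dt`. -/
noncomputable def I (n : ℕ) : ℝ :=
  2 * Real.sqrt n / Real.pi * ∫ t in Set.Ioi (0 : ℝ), (Real.sin t / t) ^ n

/-!
Split `∫₀^∞ sinc ^ n` at `π`. Since `1 - q u` exceeds `(1 - u) ^ q` at least by the factor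
`exp (q (1 - q) u² / 2)`, multiplying over the factors `1 - x² / (π j)²` of Euler's product and
using `ζ(4) = π⁴ / 90` gives `sinc x ^ q * exp (q (1 - q) x⁴ / 180) ≤ sinc (√q x)` on `[0, π)`.
Raising this to the power `n + 1` with `q = n / (n + 1)` and substituting `√q x` shows that
`√n ∫₀^π sinc ^ n` grows from `n` to `n + 1` by at least a multiple of `√n ∫₀^π x⁴ sinc ^ n`.

Beyond `π` the integral is small: integration by parts against bounded antiderivatives controls the
exponents `3` and `4`, and `|sinc| ≤ 1 / 4` turns the latter into geometric decay. The gain over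
`[0, π]` decays no faster, by Wallis' recursion for `∫₀^π sin ^ k`, so for `n ≥ 4` everything
reduces to comparing constants. For `n = 3` the signs of the two tails suffice.
-/

open Filter Set Topology

theorem mul_log_one_sub_add_le_log_one_sub_mul {q u : ℝ} (hq₀ : 0 ≤ q) (hq₁ : q ≤ 1)
    (hu₀ : 0 ≤ u) (hu₁ : u < 1) :
    q * log (1 - u) + q * (1 - q) / 2 * u ^ 2 ≤ log (1 - q * u) := by
  have hqu : |q * u| < 1 := by
    rw [abs_of_nonneg (by positivity)]
    nlinarith
  have series := ((hasSum_pow_div_log_of_abs_lt_one (by rwa [abs_of_nonneg hu₀])).mul_left q).sub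
    (hasSum_pow_div_log_of_abs_lt_one hqu)
  have coeff_nonneg (k : ℕ) :
      0 ≤ q * (u ^ (k + 1) / (k + 1)) - (q * u) ^ (k + 1) / (k + 1) := by
    have hqk : 0 ≤ 1 - q ^ k := sub_nonneg.2 (pow_le_one₀ hq₀ hq₁)
    calc (0 : ℝ) ≤ q * (1 - q ^ k) * u ^ (k + 1) / (k + 1) := by positivity
      _ = q * (u ^ (k + 1) / (k + 1)) - (q * u) ^ (k + 1) / (k + 1) := by ring
  have quadratic_term := le_hasSum series 1 fun k _ => coeff_nonneg k
  rw [Nat.cast_one] at quadratic_term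
  linarith

theorem one_sub_rpow_mul_exp_le_one_sub_mul {q u : ℝ} (hq₀ : 0 ≤ q) (hq₁ : q ≤ 1)
    (hu₀ : 0 ≤ u) (hu₁ : u < 1) :
    (1 - u) ^ q * exp (q * (1 - q) / 2 * u ^ 2) ≤ 1 - q * u := by
  rw [rpow_def_of_pos (sub_pos.2 hu₁), ← exp_add, ← le_log_iff_exp_le (by nlinarith),
    mul_comm (log _)]
  exact mul_log_one_sub_add_le_log_one_sub_mul hq₀ hq₁ hu₀ hu₁

theorem tendsto_prod_one_sub_sq_div_sinc (y : ℝ) :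
    Tendsto (fun m : ℕ => ∏ j ∈ Finset.range m, (1 - y ^ 2 / ((j : ℝ) + 1) ^ 2)) atTop
      (𝓝 (sinc (π * y))) := by
  rcases eq_or_ne y 0 with rfl | hy
  · simp
  · have hπy : π * y ≠ 0 := mul_ne_zero pi_ne_zero hy
    simpa only [mul_div_cancel_left₀ _ hπy, sinc_of_ne_zero hπy] using
      (tendsto_euler_sin_prod y).div_const (π * y)

theorem hasSum_one_div_add_one_pow_four :
    HasSum (fun j : ℕ => 1 / ((j : ℝ) + 1) ^ 4) (π ^ 4 / 90) := by
  simpa using (hasSum_nat_add_iff' 1).2 hasSum_zeta_four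

theorem tendsto_prod_exp_mul_one_div_add_one_pow_four (c : ℝ) :
    Tendsto (fun m : ℕ => ∏ j ∈ Finset.range m, exp (c * (1 / ((j : ℝ) + 1) ^ 4))) atTop
      (𝓝 (exp (c * (π ^ 4 / 90)))) := by
  simpa only [exp_sum] using (hasSum_one_div_add_one_pow_four.mul_left c).tendsto_sum_nat.rexp

theorem sinc_rpow_mul_exp_le_sinc_sqrt_mul {q x : ℝ} (hq₀ : 0 ≤ q) (hq₁ : q ≤ 1) (hx : |x| < π) :
    sinc x ^ q * exp (q * (1 - q) / 180 * x ^ 4) ≤ sinc (√q * x) := by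
  obtain ⟨y, rfl⟩ : ∃ y, x = π * y := ⟨x / π, by field_simp⟩
  let u (j : ℕ) : ℝ := y ^ 2 / ((j : ℝ) + 1) ^ 2
  have hu₀ (j : ℕ) : 0 ≤ u j := by positivity
  have hu₁ (j : ℕ) : u j < 1 := by
    have hy : |y| < 1 := by
      rwa [abs_mul, abs_of_pos pi_pos, mul_lt_iff_lt_one_right pi_pos] at hx
    rw [div_lt_one (by positivity), sq_lt_sq, abs_of_nonneg (a := (j : ℝ) + 1) (by positivity)]
    linarith [j.cast_nonneg (α := ℝ)]
  have tendsto_exp : Tendsto (fun m : ℕ => ∏ j ∈ Finset.range m, exp (q * (1 - q) / 2 * u j ^ 2))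
      atTop (𝓝 (exp (q * (1 - q) / 180 * (π * y) ^ 4))) := by
    have limit := tendsto_prod_exp_mul_one_div_add_one_pow_four (q * (1 - q) / 2 * y ^ 4)
    rw [show q * (1 - q) / 180 * (π * y) ^ 4 = q * (1 - q) / 2 * y ^ 4 * (π ^ 4 / 90) by ring]
    refine limit.congr fun m => Finset.prod_congr rfl fun j _ => congrArg exp ?_
    simp only [u]
    field_simp
  have tendsto_rpow : Tendsto (fun m : ℕ => ∏ j ∈ Finset.range m, (1 - u j) ^ q) atTop
      (𝓝 (sinc (π * y) ^ q)) := by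
    refine ((tendsto_prod_one_sub_sq_div_sinc y).rpow_const (.inr hq₀)).congr fun m => ?_
    exact (finsetProd_rpow _ _ (fun j _ => sub_nonneg.2 (hu₁ j).le) q).symm
  have tendsto_right : Tendsto (fun m : ℕ => ∏ j ∈ Finset.range m, (1 - q * u j)) atTop
      (𝓝 (sinc (√q * (π * y)))) := by
    rw [mul_left_comm]
    refine (tendsto_prod_one_sub_sq_div_sinc (√q * y)).congr fun m => ?_
    simp only [u, mul_pow, sq_sqrt hq₀, mul_div_assoc]
  refine le_of_tendsto_of_tendsto' (tendsto_rpow.mul tendsto_exp) tendsto_right fun m => ?_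
  rw [← Finset.prod_mul_distrib]
  refine Finset.prod_le_prod (fun j _ => ?_) fun j _ =>
    one_sub_rpow_mul_exp_le_one_sub_mul hq₀ hq₁ (hu₀ j) (hu₁ j)
  have := sub_pos.2 (hu₁ j)
  positivity

theorem sinc_nonneg_of_mem_Icc {x : ℝ} (hx : x ∈ Icc 0 π) : 0 ≤ sinc x := by
  rw [sinc_apply]
  split_ifs
  · exact zero_le_one
  · exact div_nonneg (sin_nonneg_of_mem_Icc hx) hx.1

theorem sinc_pow_mul_exp_le_sinc_sqrt_mul_pow {m n : ℕ} {x : ℝ} (hmn : m ≤ n) (hn : n ≠ 0)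
    (hx₀ : 0 ≤ x) (hxπ : x < π) :
    sinc x ^ m * exp (m * (n - m) / (180 * n) * x ^ 4) ≤ sinc (√(m / n) * x) ^ n := by
  have hn' : (n : ℝ) ≠ 0 := Nat.cast_ne_zero.2 hn
  have hsinc := sinc_nonneg_of_mem_Icc ⟨hx₀, hxπ.le⟩
  calc sinc x ^ m * exp (m * (n - m) / (180 * n) * x ^ 4)
      = (sinc x ^ (m / n : ℝ) * exp (m / n * (1 - m / n) / 180 * x ^ 4)) ^ n := by
        rw [mul_pow, ← rpow_mul_natCast hsinc, div_mul_cancel₀ _ hn', rpow_natCast, ← exp_nat_mul]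
        congr 2
        field_simp
    _ ≤ sinc (√(m / n) * x) ^ n := by
        gcongr
        refine sinc_rpow_mul_exp_le_sinc_sqrt_mul (by positivity) ?_ ?_
        · exact div_le_one_of_le₀ (by exact_mod_cast hmn) (by positivity)
        · rwa [abs_of_nonneg hx₀]

theorem integral_sinc_pow_mono {n : ℕ} {b c : ℝ} (hb : 0 ≤ b) (hbc : b ≤ c) (hc : c ≤ π) :
    ∫ x in 0..b, sinc x ^ n ≤ ∫ x in 0..c, sinc x ^ n := by
  refine intervalIntegral.integral_mono_interval le_rfl hb hbc ?_
    ((continuous_sinc.pow n).intervalIntegrable _ _)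
  filter_upwards [self_mem_ae_restrict measurableSet_Ioc] with x hx
  exact pow_nonneg (sinc_nonneg_of_mem_Icc ⟨hx.1.le, hx.2.trans hc⟩) n

theorem intervalIntegrable_pow_mul_sinc_pow (k n : ℕ) (a b : ℝ) :
    IntervalIntegrable (fun x => x ^ k * sinc x ^ n) volume a b :=
  ((continuous_pow k).mul (continuous_sinc.pow n)).intervalIntegrable a b

theorem integral_sinc_pow_add_le_integral_sinc_sqrt_mul_pow {m n : ℕ} (hmn : m ≤ n) (hn : n ≠ 0) :
    (∫ x in 0..π, sinc x ^ m) + m * (n - m) / (180 * n) * (∫ x in 0..π, x ^ 4 * sinc x ^ m) ≤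
      ∫ x in 0..π, sinc (√(m / n) * x) ^ n := by
  have pointwise {x : ℝ} (hx : x ∈ Ioo 0 π) :
      sinc x ^ m + m * (n - m) / (180 * n) * (x ^ 4 * sinc x ^ m) ≤ sinc (√(m / n) * x) ^ n := by
    refine le_trans ?_ (sinc_pow_mul_exp_le_sinc_sqrt_mul_pow hmn hn hx.1.le hx.2)
    have := mul_le_mul_of_nonneg_left (add_one_le_exp (m * (n - m) / (180 * n) * x ^ 4))
      (pow_nonneg (sinc_nonneg_of_mem_Icc (Ioo_subset_Icc_self hx)) m)
    linarith
  have head : IntervalIntegrable (fun x => sinc x ^ m) volume 0 π :=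
    (continuous_sinc.pow m).intervalIntegrable 0 π
  have gain := (intervalIntegrable_pow_mul_sinc_pow 4 m 0 π).const_mul (m * (n - m) / (180 * n))
  rw [← intervalIntegral.integral_const_mul, ← intervalIntegral.integral_add head gain]
  exact intervalIntegral.integral_mono_on_of_le_Ioo pi_pos.le (head.add gain)
    (((continuous_sinc.comp (continuous_const_mul _)).pow n).intervalIntegrable 0 π)
    fun x hx => pointwise hx

theorem sqrt_mul_integral_sinc_pow_add_le {m n : ℕ} (hmn : m ≤ n) (hn : n ≠ 0) :
    √m * ((∫ x in 0..π, sinc x ^ m) + m * (n - m) / (180 * n) * ∫ x in 0..π, x ^ 4 * sinc x ^ m) ≤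
      √n * ∫ x in 0..π, sinc x ^ n := by
  have hn' : (n : ℝ) ≠ 0 := Nat.cast_ne_zero.2 hn
  have hr : √(m / n : ℝ) ≤ 1 :=
    sqrt_le_one.2 (div_le_one_of_le₀ (by exact_mod_cast hmn) (by positivity))
  calc √m * ((∫ x in 0..π, sinc x ^ m) +
        m * (n - m) / (180 * n) * ∫ x in 0..π, x ^ 4 * sinc x ^ m)
      ≤ √m * ∫ x in 0..π, sinc (√(m / n) * x) ^ n := by
        gcongr
        exact integral_sinc_pow_add_le_integral_sinc_sqrt_mul_pow hmn hn
    _ = √n * (√(m / n) * ∫ x in 0..π, sinc (√(m / n) * x) ^ n) := by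
        rw [← mul_assoc, ← sqrt_mul (by positivity), mul_div_cancel₀ _ hn']
    _ = √n * ∫ x in 0..√(m / n) * π, sinc x ^ n := by
        rw [intervalIntegral.mul_integral_comp_mul_left (f := fun x => sinc x ^ n),
          mul_zero]
    _ ≤ √n * ∫ x in 0..π, sinc x ^ n := by
        gcongr
        exact integral_sinc_pow_mono (by positivity) (mul_le_of_le_one_left pi_pos.le hr) le_rfl

theorem integrableOn_Ioi_div_pow {f : ℝ → ℝ} {a : ℝ} {k : ℕ} (ha : 0 < a) (hk : 2 ≤ k)
    (hf : ContinuousOn f (Ioi a)) (hfb : Bornology.IsBounded (f '' Ioi a)) :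
    IntegrableOn (fun t => f t / t ^ k) (Ioi a) := by
  obtain ⟨C, hC⟩ := hfb.exists_norm_le
  have hpow : IntegrableOn (fun t : ℝ => (t ^ k)⁻¹) (Ioi a) := by
    refine (integrableOn_Ioi_rpow_of_lt (a := -(k : ℝ)) ?_ ha).congr_fun (fun t ht => ?_)
      measurableSet_Ioi
    · have : (2 : ℝ) ≤ k := by exact_mod_cast hk
      linarith
    · simp only [rpow_neg (ha.trans ht).le, rpow_natCast]
  refine hpow.bdd_mul (hf.aestronglyMeasurable measurableSet_Ioi) (c := C) ?_
  filter_upwards [self_mem_ae_restrict measurableSet_Ioi] with t ht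
  exact hC _ (mem_image_of_mem f ht)

theorem tendsto_div_pow_atTop_zero {f : ℝ → ℝ} {a : ℝ} {k : ℕ} (hk : k ≠ 0)
    (hf : Bornology.IsBounded (f '' Ioi a)) :
    Tendsto (fun t => f t / t ^ k) atTop (𝓝 0) := by
  obtain ⟨C, hC⟩ := hf.exists_norm_le
  refine bdd_le_mul_tendsto_zero' C ?_ (tendsto_pow_atTop hk).inv_tendsto_atTop
  filter_upwards [eventually_gt_atTop a] with t ht
  exact hC _ (mem_image_of_mem f ht)

theorem integral_Ioi_deriv_div_pow {F f : ℝ → ℝ} {a : ℝ} {k : ℕ} (ha : 0 < a) (hk : k ≠ 0)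
    (hF : ∀ t ∈ Ici a, HasDerivAt F (f t) t) (hFb : Bornology.IsBounded (F '' Ioi a))
    (hf : IntegrableOn (fun t => f t / t ^ k) (Ioi a)) :
    ∫ t in Ioi a, f t / t ^ k = k * (∫ t in Ioi a, F t / t ^ (k + 1)) - F a / a ^ k := by
  have hderiv {t : ℝ} (ht : a ≤ t) :
      HasDerivAt (fun t => F t / t ^ k) (f t / t ^ k - k * (F t / t ^ (k + 1))) t := by
    have ht₀ : t ≠ 0 := (ha.trans_le ht).ne'
    refine ((hF t ht).div (hasDerivAt_pow k t) (pow_ne_zero k ht₀)).congr_deriv ?_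
    obtain ⟨j, rfl⟩ := Nat.exists_eq_succ_of_ne_zero hk
    simp only [Nat.succ_eq_add_one, Nat.add_sub_cancel]
    field_simp
    ring
  have hint : IntegrableOn (fun t => k * (F t / t ^ (k + 1))) (Ioi a) :=
    (integrableOn_Ioi_div_pow ha (by lia)
      (fun t ht => (hF t (mem_Ioi.1 ht).le).continuousAt.continuousWithinAt) hFb).const_mul _
  have h := integral_Ioi_of_hasDerivAt_of_tendsto' (fun t ht => hderiv ht) (hf.sub hint)
    (tendsto_div_pow_atTop_zero hk hFb)
  rw [integral_sub hf hint, integral_const_mul] at h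
  linarith

theorem integral_Ioi_div_pow_nonpos {f : ℝ → ℝ} {a : ℝ} (ha : 0 ≤ a) (hf : ∀ t ∈ Ioi a, f t ≤ 0)
    (k : ℕ) : ∫ t in Ioi a, f t / t ^ k ≤ 0 :=
  setIntegral_nonpos measurableSet_Ioi fun t ht =>
    div_nonpos_of_nonpos_of_nonneg (hf t ht) (pow_nonneg (ha.trans_lt ht).le k)

theorem integral_Ioi_deriv_div_pow_nonpos {F f : ℝ → ℝ} {a : ℝ} {k : ℕ} (ha : 0 < a) (hk : k ≠ 0)
    (hF : ∀ t ∈ Ici a, HasDerivAt F (f t) t) (hFb : Bornology.IsBounded (F '' Ioi a))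
    (hf : IntegrableOn (fun t => f t / t ^ k) (Ioi a)) (hFa : 0 ≤ F a)
    (hFint : ∫ t in Ioi a, F t / t ^ (k + 1) ≤ 0) : ∫ t in Ioi a, f t / t ^ k ≤ 0 := by
  rw [integral_Ioi_deriv_div_pow ha hk hF hFb hf]
  exact sub_nonpos.2 ((mul_nonpos_of_nonneg_of_nonpos k.cast_nonneg hFint).trans (by positivity))

theorem isBounded_image_of_continuous_of_periodic {f : ℝ → ℝ} {c : ℝ} (hf : Continuous f)
    (hc : c ≠ 0) (hper : Function.Periodic f c) (s : Set ℝ) : Bornology.IsBounded (f '' s) :=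
  (hper.isBounded_of_continuous hc hf).subset (image_subset_range f s)

theorem integral_Ioi_inv_pow_succ {a : ℝ} {k : ℕ} (ha : 0 < a) (hk : k ≠ 0) :
    ∫ t in Ioi a, (t ^ (k + 1))⁻¹ = 1 / (k * a ^ k) := by
  have hk' : (0 : ℝ) < k := by positivity
  have h := integral_Ioi_rpow_of_lt (a := -((k + 1 : ℕ) : ℝ)) (by push_cast; linarith) ha
  calc ∫ t in Ioi a, (t ^ (k + 1))⁻¹ = ∫ t in Ioi a, t ^ (-((k + 1 : ℕ) : ℝ)) :=
        setIntegral_congr_fun measurableSet_Ioi fun t ht => by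
          simp only [rpow_neg (ha.trans ht).le, rpow_natCast]
    _ = 1 / (k * a ^ k) := by
        rw [h, show -((k + 1 : ℕ) : ℝ) + 1 = -k by push_cast; ring, rpow_neg ha.le, rpow_natCast,
          neg_div_neg_eq, ← one_div, div_div, mul_comm]

theorem integral_Ioi_sinc_pow {a : ℝ} (ha : 0 ≤ a) (n : ℕ) :
    ∫ t in Ioi a, sinc t ^ n = ∫ t in Ioi a, (sin t / t) ^ n :=
  setIntegral_congr_fun measurableSet_Ioi fun t ht => by
    simp only [sinc_of_ne_zero (ha.trans_lt ht).ne']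

theorem integrableOn_Ioi_sin_pow_div_pow {a : ℝ} {n : ℕ} (ha : 0 < a) (hn : 2 ≤ n) :
    IntegrableOn (fun t => sin t ^ n / t ^ n) (Ioi a) :=
  integrableOn_Ioi_div_pow ha hn (by fun_prop)
    (isBounded_image_of_continuous_of_periodic (by fun_prop) two_pi_pos.ne' (fun t => by simp) _)

theorem integrableOn_Ioi_sinc_pow {a : ℝ} {n : ℕ} (ha : 0 < a) (hn : 2 ≤ n) :
    IntegrableOn (fun t => sinc t ^ n) (Ioi a) :=
  (integrableOn_Ioi_sin_pow_div_pow ha hn).congr_fun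
    (fun t ht => by simp only [sinc_of_ne_zero (ha.trans ht).ne', div_pow]) measurableSet_Ioi

theorem integral_Ioi_pi_sinc_pow_three_nonpos : ∫ t in Ioi π, sinc t ^ 3 ≤ 0 := by
  -- `cos³ / 3 - cos`, shifted so as to vanish at `π`
  let F : ℝ → ℝ := fun t => (cos t + 1) ^ 2 * (cos t - 2) / 3
  have hF (t : ℝ) : HasDerivAt F (sin t ^ 3) t := by
    refine (((((hasDerivAt_cos t).add_const 1).pow 2).mul
      ((hasDerivAt_cos t).sub_const 2)).div_const 3).congr_deriv ?_
    simp only [Pi.pow_apply]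
    push_cast
    linear_combination -sin t * sin_sq_add_cos_sq t
  have hFb : Bornology.IsBounded (F '' Ioi π) :=
    isBounded_image_of_continuous_of_periodic (by fun_prop) two_pi_pos.ne' (fun t => by simp [F]) _
  have F_nonpos (t : ℝ) : F t ≤ 0 := by
    have : 0 ≤ 2 - cos t := by linarith [cos_le_one t]
    have : 0 ≤ (cos t + 1) ^ 2 * (2 - cos t) / 3 := by positivity
    simp only [F]
    linarith
  simp_rw [integral_Ioi_sinc_pow pi_pos.le, div_pow]
  exact integral_Ioi_deriv_div_pow_nonpos pi_pos three_ne_zero (fun t _ => hF t) hFb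
    (integrableOn_Ioi_sin_pow_div_pow pi_pos (by norm_num)) (by simp [F])
    (integral_Ioi_div_pow_nonpos pi_pos.le (fun t _ => F_nonpos t) _)

theorem integrableOn_Ioi_sin_pow_four_sub_div_pow {a : ℝ} (ha : 0 < a) (c : ℝ) :
    IntegrableOn (fun t => (sin t ^ 4 - c) / t ^ 4) (Ioi a) :=
  integrableOn_Ioi_div_pow ha (by norm_num) (by fun_prop)
    (isBounded_image_of_continuous_of_periodic (by fun_prop) two_pi_pos.ne' (fun t => by simp) _)

theorem integral_Ioi_pi_sin_pow_four_sub_div_pow_nonpos :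
    ∫ t in Ioi π, (sin t ^ 4 - 3 / 8) / t ^ 4 ≤ 0 := by
  -- `sin ^ 4` has mean `3 / 8`, so `sin ^ 4 - 3 / 8` has a bounded antiderivative `F`; as `F` is
  -- odd, it has mean zero too, whence the bounded `G`.
  let F : ℝ → ℝ := fun t => -(sin t * cos t * (3 + 2 * sin t ^ 2)) / 8
  let G : ℝ → ℝ := fun t => -(sin t ^ 2 * (3 + sin t ^ 2)) / 16
  have hF (t : ℝ) : HasDerivAt F (sin t ^ 4 - 3 / 8) t := by
    refine (((hasDerivAt_sin t).mul (hasDerivAt_cos t)).mul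
      ((((hasDerivAt_sin t).pow 2).const_mul 2).const_add 3)).neg.div_const 8 |>.congr_deriv ?_
    simp only [Pi.pow_apply, Pi.mul_apply]
    push_cast
    linear_combination (-(3 / 8) - 3 / 4 * sin t ^ 2) * sin_sq_add_cos_sq t
  have hG (t : ℝ) : HasDerivAt G (F t) t := by
    refine (((hasDerivAt_sin t).pow 2).mul
      (((hasDerivAt_sin t).pow 2).const_add 3)).neg.div_const 16 |>.congr_deriv ?_
    simp only [F, Pi.pow_apply]
    push_cast
    ring
  have hFb : Bornology.IsBounded (F '' Ioi π) :=
    isBounded_image_of_continuous_of_periodic (by fun_prop) two_pi_pos.ne' (fun t => by simp [F]) _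
  have hGb : Bornology.IsBounded (G '' Ioi π) :=
    isBounded_image_of_continuous_of_periodic (by fun_prop) two_pi_pos.ne' (fun t => by simp [G]) _
  have G_nonpos (t : ℝ) : G t ≤ 0 := by
    have : 0 ≤ sin t ^ 2 * (3 + sin t ^ 2) / 16 := by positivity
    simp only [G]
    linarith
  have integral_F_nonpos : ∫ t in Ioi π, F t / t ^ (4 + 1) ≤ 0 :=
    integral_Ioi_deriv_div_pow_nonpos pi_pos (Nat.succ_ne_zero 4) (fun t _ => hG t) hGb
      (integrableOn_Ioi_div_pow pi_pos (by norm_num) (by fun_prop) hFb) (by simp [G])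
      (integral_Ioi_div_pow_nonpos pi_pos.le (fun t _ => G_nonpos t) _)
  exact integral_Ioi_deriv_div_pow_nonpos pi_pos four_ne_zero (fun t _ => hF t) hFb
    (integrableOn_Ioi_sin_pow_four_sub_div_pow pi_pos _) (by simp [F]) integral_F_nonpos

theorem integral_Ioi_pi_sinc_pow_four_le : ∫ t in Ioi π, sinc t ^ 4 ≤ 1 / (8 * π ^ 3) := by
  have integrable_mean : IntegrableOn (fun t : ℝ => 3 / 8 / t ^ 4) (Ioi π) :=
    integrableOn_Ioi_div_pow (f := fun _ => 3 / 8) pi_pos (by norm_num) continuousOn_const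
      (isBounded_image_of_continuous_of_periodic continuous_const one_ne_zero (fun _ => rfl) _)
  have integral_mean : ∫ t : ℝ in Ioi π, 3 / 8 / t ^ 4 = 1 / (8 * π ^ 3) := by
    simp only [div_eq_mul_inv (3 / 8 : ℝ), integral_const_mul,
      integral_Ioi_inv_pow_succ (k := 3) pi_pos three_ne_zero]
    push_cast
    field_simp
  calc ∫ t in Ioi π, sinc t ^ 4
      = ∫ t in Ioi π, ((sin t ^ 4 - 3 / 8) / t ^ 4 + 3 / 8 / t ^ 4) := by
        simp_rw [integral_Ioi_sinc_pow pi_pos.le, ← add_div, sub_add_cancel, div_pow]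
    _ = (∫ t in Ioi π, (sin t ^ 4 - 3 / 8) / t ^ 4) + 1 / (8 * π ^ 3) := by
        rw [integral_add (integrableOn_Ioi_sin_pow_four_sub_div_pow pi_pos _) integrable_mean,
          integral_mean]
    _ ≤ 1 / (8 * π ^ 3) := by linarith [integral_Ioi_pi_sin_pow_four_sub_div_pow_nonpos]

theorem abs_sinc_le_one_div_four {t : ℝ} (ht : π ≤ t) : |sinc t| ≤ 1 / 4 := by
  have ht₀ : 0 < t := pi_pos.trans_le ht
  rw [sinc_of_ne_zero ht₀.ne', abs_div, abs_of_pos ht₀, div_le_iff₀ ht₀]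
  rcases le_or_gt 4 t with h4 | h4
  · linarith [abs_sin_le_one t]
  · have : |sin t| ≤ t - π := by
      simpa only [sin_sub_pi, abs_neg, abs_of_nonneg (sub_nonneg.2 ht)] using
        abs_sin_le_abs (x := t - π)
    linarith [pi_gt_three]

theorem abs_integral_Ioi_pi_sinc_pow_add_le {k : ℕ} (hk : Even k) (hk₂ : 2 ≤ k) (m : ℕ) :
    |∫ t in Ioi π, sinc t ^ (k + m)| ≤ (1 / 4) ^ m * ∫ t in Ioi π, sinc t ^ k := by
  rw [← integral_const_mul]
  refine norm_integral_le_of_norm_le (f := fun t => sinc t ^ (k + m))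
    ((integrableOn_Ioi_sinc_pow pi_pos hk₂).const_mul _) ?_
  filter_upwards [self_mem_ae_restrict measurableSet_Ioi] with t ht
  calc ‖sinc t ^ (k + m)‖ = |sinc t| ^ m * sinc t ^ k := by
        rw [norm_eq_abs, abs_pow, pow_add, hk.pow_abs, mul_comm]
    _ ≤ (1 / 4) ^ m * sinc t ^ k := by
        have := hk.pow_nonneg (sinc t)
        gcongr
        exact abs_sinc_le_one_div_four (mem_Ioi.1 ht).le

theorem mul_integral_sin_pow_le_integral_sin_pow_succ (k : ℕ) :
    (k + 1) / (k + 2) * ∫ x in 0..π, sin x ^ k ≤ ∫ x in 0..π, sin x ^ (k + 1) := by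
  have h := integral_sin_pow (a := 0) (b := π) k
  simp only [sin_zero, sin_pi, ne_eq, k.succ_ne_zero, not_false_eq_true, zero_pow, zero_mul,
    sub_self, zero_div, zero_add] at h
  rw [← h]
  exact integral_sin_pow_succ_le (k + 1)

theorem pow_mul_integral_sin_pow_le_integral_sin_pow_add (k m : ℕ) :
    ((k + 1) / (k + 2)) ^ m * ∫ x in 0..π, sin x ^ k ≤ ∫ x in 0..π, sin x ^ (k + m) := by
  induction m with
  | zero => simp
  | succ m ih =>
    have ratio_mono : ((k : ℝ) + 1) / (k + 2) ≤ ((k + m : ℕ) + 1) / ((k + m : ℕ) + 2) := by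
      push_cast
      rw [div_le_div_iff₀ (by positivity) (by positivity)]
      nlinarith [m.cast_nonneg (α := ℝ)]
    calc ((k + 1) / (k + 2)) ^ (m + 1) * ∫ x in 0..π, sin x ^ k
        = (k + 1) / (k + 2) * (((k + 1) / (k + 2)) ^ m * ∫ x in 0..π, sin x ^ k) := by ring
      _ ≤ ((k + m : ℕ) + 1) / ((k + m : ℕ) + 2) * ∫ x in 0..π, sin x ^ (k + m) := by
          gcongr
          exact mul_nonneg (by positivity) (integral_sin_pow_pos k).le
      _ ≤ ∫ x in 0..π, sin x ^ (k + (m + 1)) :=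
          mul_integral_sin_pow_le_integral_sin_pow_succ (k + m)

theorem integral_sin_pow_add_div_pow_le (k m : ℕ) :
    (∫ x in 0..π, sin x ^ (k + m)) / π ^ m ≤ ∫ x in 0..π, x ^ k * sinc x ^ (k + m) := by
  rw [← intervalIntegral.integral_div]
  refine intervalIntegral.integral_mono_on_of_le_Ioo pi_pos.le
    (Continuous.intervalIntegrable (by fun_prop) _ _)
    (intervalIntegrable_pow_mul_sinc_pow k (k + m) 0 π) fun x hx => ?_
  have hx₀ : 0 < x := hx.1
  have hsin : 0 ≤ sin x := sin_nonneg_of_mem_Icc (Ioo_subset_Icc_self hx)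
  calc sin x ^ (k + m) / π ^ m ≤ sin x ^ (k + m) / x ^ m := by
        gcongr
        exact hx.2.le
    _ = x ^ k * sinc x ^ (k + m) := by
        rw [sinc_of_ne_zero hx₀.ne', div_pow, pow_add x]
        field_simp

theorem pow_mul_integral_sin_pow_le_integral_pow_mul_sinc_pow (k m : ℕ) :
    ((k + 1) / ((k + 2) * π)) ^ m * ∫ x in 0..π, sin x ^ k ≤
      ∫ x in 0..π, x ^ k * sinc x ^ (k + m) := by
  refine le_trans ?_ (integral_sin_pow_add_div_pow_le k m)
  rw [← div_div, div_pow, div_mul_eq_mul_div]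
  gcongr
  exact pow_mul_integral_sin_pow_le_integral_sin_pow_add k m

theorem integral_pow_mul_sinc_pow_pos (k n : ℕ) : 0 < ∫ x in 0..π, x ^ k * sinc x ^ n := by
  refine intervalIntegral.intervalIntegral_pos_of_pos_on
    (intervalIntegrable_pow_mul_sinc_pow k n 0 π) (fun x hx => ?_) pi_pos
  have hsin := sin_pos_of_mem_Ioo hx
  have hx₀ : 0 < x := hx.1
  rw [sinc_of_ne_zero hx₀.ne']
  positivity

theorem le_integral_pow_four_mul_sinc_pow (m : ℕ) :
    (1 / 4) ^ m * (3 * π / 8) ≤ ∫ x in 0..π, x ^ 4 * sinc x ^ (4 + m) := by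
  have wallis : ∫ x in 0..π, sin x ^ 4 = 3 * π / 8 := by
    refine (integral_sin_pow_even 2).trans ?_
    norm_num [Finset.prod_range_succ]
    ring
  have ratio : (1 / 4 : ℝ) ≤ ((4 : ℕ) + 1) / (((4 : ℕ) + 2) * π) := by
    rw [le_div_iff₀ (by positivity)]
    push_cast
    linarith [pi_lt_d2]
  calc (1 / 4) ^ m * (3 * π / 8)
      ≤ (((4 : ℕ) + 1) / (((4 : ℕ) + 2) * π)) ^ m * (3 * π / 8) := by gcongr
    _ ≤ ∫ x in 0..π, x ^ 4 * sinc x ^ (4 + m) :=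
        wallis ▸ pow_mul_integral_sin_pow_le_integral_pow_mul_sinc_pow 4 m

theorem abs_integral_Ioi_pi_sinc_pow_four_add_le (m : ℕ) :
    |∫ t in Ioi π, sinc t ^ (4 + m)| ≤ (1 / 4) ^ m * (1 / (8 * π ^ 3)) :=
  (abs_integral_Ioi_pi_sinc_pow_add_le (by decide) (by norm_num) m).trans <| by
    gcongr
    exact integral_Ioi_pi_sinc_pow_four_le

theorem sqrt_mul_integral_Ioi_pi_sinc_pow_sub_le (m : ℕ) :
    √(4 + m : ℕ) * (∫ t in Ioi π, sinc t ^ (4 + m)) -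
        √((4 + m : ℕ) + 1) * (∫ t in Ioi π, sinc t ^ (4 + m + 1)) ≤
      √(4 + m : ℕ) * ((1 / 4) ^ m * (41 / (256 * π ^ 3))) := by
  have sqrt_succ : √((4 + m : ℕ) + 1 : ℝ) ≤ √(4 + m : ℕ) * (9 / 8) := by
    rw [sqrt_le_left (by positivity), mul_pow, sq_sqrt (by positivity)]
    push_cast
    linarith [m.cast_nonneg (α := ℝ)]
  have tail := abs_integral_Ioi_pi_sinc_pow_four_add_le m
  have tail_succ := abs_integral_Ioi_pi_sinc_pow_four_add_le (m + 1)
  rw [← add_assoc] at tail_succ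
  calc √(4 + m : ℕ) * (∫ t in Ioi π, sinc t ^ (4 + m)) -
        √((4 + m : ℕ) + 1) * (∫ t in Ioi π, sinc t ^ (4 + m + 1))
      ≤ √(4 + m : ℕ) * |∫ t in Ioi π, sinc t ^ (4 + m)| +
        √((4 + m : ℕ) + 1) * |∫ t in Ioi π, sinc t ^ (4 + m + 1)| := by
        rw [sub_eq_add_neg, ← mul_neg]
        gcongr
        · exact le_abs_self _
        · exact neg_le_abs _
    _ ≤ √(4 + m : ℕ) * ((1 / 4) ^ m * (1 / (8 * π ^ 3))) +
        √(4 + m : ℕ) * (9 / 8) * ((1 / 4) ^ (m + 1) * (1 / (8 * π ^ 3))) := by gcongr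
    _ = √(4 + m : ℕ) * ((1 / 4) ^ m * (41 / (256 * π ^ 3))) := by ring

theorem sqrt_mul_integral_Ioi_pi_sinc_pow_sub_lt_of_four_le {n : ℕ} (hn : 4 ≤ n) :
    √n * (∫ t in Ioi π, sinc t ^ n) - √(n + 1) * (∫ t in Ioi π, sinc t ^ (n + 1)) <
      √n * (n / (180 * (n + 1)) * ∫ x in 0..π, x ^ 4 * sinc x ^ n) := by
  obtain ⟨m, rfl⟩ := Nat.exists_eq_add_of_le hn
  have hπ : 41 / (256 * π ^ 3) < π / 600 := by
    rw [div_lt_div_iff₀ (by positivity) (by norm_num)]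
    have := pow_lt_pow_left₀ pi_gt_d2 (by norm_num) four_ne_zero
    linarith
  have coeff : (1 / 225 : ℝ) ≤ (4 + m : ℕ) / (180 * ((4 + m : ℕ) + 1)) := by
    rw [div_le_div_iff₀ (by norm_num) (by positivity)]
    push_cast
    linarith [m.cast_nonneg (α := ℝ)]
  calc √(4 + m : ℕ) * (∫ t in Ioi π, sinc t ^ (4 + m)) -
        √((4 + m : ℕ) + 1) * (∫ t in Ioi π, sinc t ^ (4 + m + 1))
      ≤ √(4 + m : ℕ) * ((1 / 4) ^ m * (41 / (256 * π ^ 3))) :=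
        sqrt_mul_integral_Ioi_pi_sinc_pow_sub_le m
    _ < √(4 + m : ℕ) * ((1 / 4) ^ m * (π / 600)) := by gcongr
    _ = √(4 + m : ℕ) * (1 / 225 * ((1 / 4) ^ m * (3 * π / 8))) := by ring
    _ ≤ √(4 + m : ℕ) * ((4 + m : ℕ) / (180 * ((4 + m : ℕ) + 1)) *
        ∫ x in 0..π, x ^ 4 * sinc x ^ (4 + m)) := by
        gcongr
        exact le_integral_pow_four_mul_sinc_pow m

theorem sqrt_mul_integral_Ioi_pi_sinc_pow_sub_lt {n : ℕ} (hn : 3 ≤ n) :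
    √n * (∫ t in Ioi π, sinc t ^ n) - √(n + 1) * (∫ t in Ioi π, sinc t ^ (n + 1)) <
      √n * (n / (180 * (n + 1)) * ∫ x in 0..π, x ^ 4 * sinc x ^ n) := by
  rcases hn.eq_or_lt with rfl | hn
  · have tail_four_nonneg : 0 ≤ ∫ t in Ioi π, sinc t ^ (3 + 1) :=
      integral_nonneg fun t => (by decide : Even 4).pow_nonneg _
    have gain_pos := integral_pow_mul_sinc_pow_pos 4 3
    calc √(3 : ℕ) * (∫ t in Ioi π, sinc t ^ 3) - √((3 : ℕ) + 1) * (∫ t in Ioi π, sinc t ^ (3 + 1))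
        ≤ 0 := sub_nonpos.2 <| (mul_nonpos_of_nonneg_of_nonpos (sqrt_nonneg _)
          integral_Ioi_pi_sinc_pow_three_nonpos).trans (by positivity)
      _ < √(3 : ℕ) * ((3 : ℕ) / (180 * ((3 : ℕ) + 1)) * ∫ x in 0..π, x ^ 4 * sinc x ^ 3) := by
          positivity
  · exact sqrt_mul_integral_Ioi_pi_sinc_pow_sub_lt_of_four_le hn

theorem I_eq_sqrt_mul_integral_add {n : ℕ} (hn : 2 ≤ n) :
    I n = 2 / π * (√n * ((∫ x in 0..π, sinc x ^ n) + ∫ t in Ioi π, sinc t ^ n)) := by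
  have split : (∫ x in 0..π, sinc x ^ n) + ∫ t in Ioi π, sinc t ^ n =
      ∫ t in Ioi 0, (sin t / t) ^ n := by
    rw [← integral_Ioi_sinc_pow le_rfl]
    exact intervalIntegral.integral_interval_add_Ioi'
      ((continuous_sinc.pow n).intervalIntegrable 0 π) (integrableOn_Ioi_sinc_pow pi_pos hn)
  rw [I, split]
  ring

/-- `I (n) < I (n+1)` for every integer `n ≥ 3`. -/
theorem I_strict_mono (n : ℕ) (hn : 3 ≤ n) : I n < I (n + 1) := by
  have head := sqrt_mul_integral_sinc_pow_add_le (Nat.le_add_right n 1) n.add_one_ne_zero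
  have tail := sqrt_mul_integral_Ioi_pi_sinc_pow_sub_lt hn
  rw [I_eq_sqrt_mul_integral_add (by lia), I_eq_sqrt_mul_integral_add (by lia)]
  refine mul_lt_mul_of_pos_left ?_ (by positivity)
  push_cast at head ⊢
  rw [add_sub_cancel_left, mul_one] at head
  linarith
end

section
/- Let t(x) : [0, x(1.1)] → [0, 1.1] be the inverse of the function x(t) = √(−6 log((sin t)/t)). Then t is seven times differentiable on [0, x(1.1)] and |t⁽⁷⁾(x)| ≤ 0.50344 for all x ∈ [0, x(1.1)]. -/
open Real Set

/-- `x(t) = √(-6 log((sin t)/t))`, with `(sin t)/t` taken to be `1` at `t = 0`. -/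
noncomputable def xfun (t : ℝ) : ℝ :=
  Real.sqrt (-6 * Real.log (if t = 0 then 1 else Real.sin t / t))

/-! With `c = 3 (1 - t cot t)`, the inverse `t` of `xfun` satisfies the differential equations
`c t' = x t` and `3 t t' = c' + x - x c / 3`. They determine rational coefficients of power series
`t = x + ∑ v n x ^ (2n+3)` and `c = x² + ∑ u n x ^ (2n+4)`, and comparison with a multiple of
`catalan n / 20 ^ n` gives `|v n| ≤ (1/5)^n / 60` and `|u n| ≤ (1/5)^n / 15`, hence convergence for
`|x| < 2`. Conversely, the equations say that `g = 1 - c / 3 + i t` satisfies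
`g' = (x / 3 + i t') g`, so that `g = exp (x² / 6 + i t)`; the imaginary part is
`t = exp (x² / 6) sin t`, that is, `xfun t = x`. Since `xfun 1.1 ^ 2 ≤ 13 / 10`, the seventh
derivative is bounded by a finite rational computation and a geometric tail. -/

section Coefficients

open Finset.HasAntidiagonal (antidiagonal mem_antidiagonal)

/-- One step of the recursion for the pairs `(v n, u n)` of coefficients of
`t = x + ∑ v n x ^ (2n+3)` and `c = 3 (1 - t cot t) = x² + ∑ u n x ^ (2n+4)`, obtained by
comparing coefficients in `c t' = x t` and `3 t t' = c' + x - x c / 3`. -/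
def coeffStep (n : ℕ) (f : ℕ → ℚ × ℚ) : ℚ × ℚ :=
  let e := 3 / 2 * ∑ p ∈ antidiagonal n, (f p.1).1 * (f p.2).1 + (f n).2 / (6 * (n + 3))
  let v := -(∑ p ∈ antidiagonal n, (2 * p.1 + 3) * ((f p.1).1 * (f p.2).2) + e) / (2 * n + 7)
  (v, 3 * v + e)

/-- A table whose entry `k` is the `k`-th pair of coefficients for all `k ≤ n`. Tabulating keeps
the course-of-values recursion structural, hence computable in the kernel. -/
def coeffTable : ℕ → ℕ → ℚ × ℚ
  | 0 => fun _ => (-1 / 60, 1 / 30)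
  | n + 1 => fun k => if k ≤ n then coeffTable n k else coeffStep n (coeffTable n)

/-- The coefficient of `x ^ (2n+3)` in the expansion of `t`. -/
def invCoeff (n : ℕ) : ℚ := (coeffTable n n).1

/-- The coefficient of `x ^ (2n+4)` in the expansion of `3 (1 - t cot t)`. -/
def cotCoeff (n : ℕ) : ℚ := (coeffTable n n).2

theorem invCoeff_zero : invCoeff 0 = -1 / 60 := rfl

theorem cotCoeff_zero : cotCoeff 0 = 1 / 30 := rfl

theorem coeffTable_eq_diag {n k : ℕ} (h : k ≤ n) : coeffTable n k = coeffTable k k := by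
  induction n, h using Nat.le_induction with
  | base => rfl
  | succ n hkn ih => simp only [coeffTable, if_pos hkn, ih]

theorem coeffStep_congr {n : ℕ} {f g : ℕ → ℚ × ℚ} (h : ∀ k ≤ n, f k = g k) :
    coeffStep n f = coeffStep n g := by
  have hsum (F : ℕ × ℕ → ℚ × ℚ → ℚ × ℚ → ℚ) :
      ∑ p ∈ antidiagonal n, F p (f p.1) (f p.2) =
        ∑ p ∈ antidiagonal n, F p (g p.1) (g p.2) :=
    Finset.sum_congr rfl fun p hp => by
      rw [h _ (Finset.HasAntidiagonal.antidiagonal.fst_le hp),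
        h _ (Finset.HasAntidiagonal.antidiagonal.snd_le hp)]
  simp only [coeffStep, h n le_rfl, hsum fun _ a b => a.1 * b.1,
    hsum fun p a b => (2 * p.1 + 3) * (a.1 * b.2)]

theorem coeffTable_succ_self (n : ℕ) :
    coeffTable (n + 1) (n + 1) = coeffStep n fun k => (invCoeff k, cotCoeff k) := by
  simp only [coeffTable, Nat.not_succ_le_self, if_false]
  exact coeffStep_congr fun k hk => coeffTable_eq_diag hk

theorem invCoeff_succ (n : ℕ) : (2 * n + 7) * invCoeff (n + 1) =
    -(∑ p ∈ antidiagonal n, (2 * p.1 + 3) * (invCoeff p.1 * cotCoeff p.2) +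
      (cotCoeff (n + 1) - 3 * invCoeff (n + 1))) := by
  simp only [invCoeff, cotCoeff, coeffTable_succ_self, coeffStep]
  field_simp
  ring

theorem cotCoeff_succ (n : ℕ) : cotCoeff (n + 1) - 3 * invCoeff (n + 1) =
    3 / 2 * ∑ p ∈ antidiagonal n, invCoeff p.1 * invCoeff p.2 +
      cotCoeff n / (6 * (n + 3)) := by
  simp only [invCoeff, cotCoeff, coeffTable_succ_self, coeffStep]
  ring

theorem sum_antidiagonal_two_mul_fst_add {R : Type*} [CommRing R] (a : ℕ → R) (c : R) (n : ℕ) :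
    ∑ p ∈ antidiagonal n, (2 * p.1 + c) * (a p.1 * a p.2) =
      (n + c) * ∑ p ∈ antidiagonal n, a p.1 * a p.2 := by
  have hswap : ∑ p ∈ antidiagonal n, (p.1 : R) * (a p.1 * a p.2) =
      ∑ p ∈ antidiagonal n, (p.2 : R) * (a p.1 * a p.2) := by
    rw [← Finset.Nat.sum_antidiagonal_swap]
    simp only [Prod.fst_swap, Prod.snd_swap, mul_comm (a _) (a _)]
  calc ∑ p ∈ antidiagonal n, (2 * p.1 + c) * (a p.1 * a p.2)
      = ∑ p ∈ antidiagonal n, (p.1 : R) * (a p.1 * a p.2) +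
          (∑ p ∈ antidiagonal n, (p.1 : R) * (a p.1 * a p.2) +
            c * ∑ p ∈ antidiagonal n, a p.1 * a p.2) := by
        simp only [Finset.mul_sum, ← Finset.sum_add_distrib]
        exact Finset.sum_congr rfl fun _ _ => by ring
    _ = (n + c) * ∑ p ∈ antidiagonal n, a p.1 * a p.2 := by
        nth_rw 2 [hswap]
        simp only [Finset.mul_sum, ← Finset.sum_add_distrib]
        refine Finset.sum_congr rfl fun p hp => ?_
        rw [← mem_antidiagonal.mp hp]
        push_cast
        ring

/-- The majorant of the coefficients. Catalan numbers are stable under the convolutions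
in the recursion, see `sum_antidiagonal_majorant`. -/
def majorant (n : ℕ) : ℚ := catalan n / 20 ^ n

theorem majorant_nonneg (n : ℕ) : 0 ≤ majorant n := by
  unfold majorant
  positivity

theorem sum_antidiagonal_majorant (n : ℕ) :
    ∑ p ∈ antidiagonal n, majorant p.1 * majorant p.2 = 20 * majorant (n + 1) := by
  have hterm : ∀ p ∈ antidiagonal n,
      majorant p.1 * majorant p.2 = (catalan p.1 * catalan p.2 : ℕ) / 20 ^ n := fun p hp => by
    rw [majorant, majorant, ← mem_antidiagonal.mp hp, pow_add, div_mul_div_comm, Nat.cast_mul]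
  rw [Finset.sum_congr rfl hterm, ← Finset.sum_div, ← Nat.cast_sum, ← catalan_succ', majorant,
    pow_succ]
  field_simp

theorem catalan_le_catalan_succ (n : ℕ) : catalan n ≤ catalan (n + 1) := by
  rw [catalan_succ']
  simpa using Finset.single_le_sum (f := fun p : ℕ × ℕ => catalan p.1 * catalan p.2)
    (fun _ _ => Nat.zero_le _) (show (0, n) ∈ antidiagonal n by simp)

theorem one_le_catalan (n : ℕ) : 1 ≤ catalan n :=
  catalan_zero.symm.le.trans (monotone_nat_of_le_succ catalan_le_catalan_succ n.zero_le)

theorem catalan_le_four_pow (n : ℕ) : catalan n ≤ 4 ^ n := by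
  rw [catalan_eq_centralBinom_div]
  exact (Nat.div_le_self _ _).trans n.centralBinom_le_four_pow

theorem majorant_le_succ (n : ℕ) : majorant n ≤ 20 * majorant (n + 1) := by
  have h : (catalan n : ℚ) ≤ catalan (n + 1) := mod_cast catalan_le_catalan_succ n
  rw [majorant, majorant, pow_succ, mul_div_assoc', mul_comm 20,
    mul_div_mul_right _ _ (by norm_num)]
  gcongr

theorem majorant_le_one_fifth_pow (n : ℕ) : majorant n ≤ (1 / 5) ^ n := by
  have h : (catalan n : ℚ) ≤ 4 ^ n := mod_cast catalan_le_four_pow n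
  calc majorant n ≤ 4 ^ n / 20 ^ n := by unfold majorant; gcongr
    _ = (1 / 5) ^ n := by rw [← div_pow]; norm_num

theorem one_div_twenty_pow_le_majorant (n : ℕ) : 1 / 20 ^ n ≤ majorant n := by
  have h : (1 : ℚ) ≤ catalan n := mod_cast one_le_catalan n
  unfold majorant
  gcongr

theorem abs_sum_antidiagonal_le {R : Type*} [CommRing R] [LinearOrder R] [IsStrictOrderedRing R]
    {n : ℕ} {a b M w : ℕ → R} {A B : R} (hA : 0 ≤ A) (hM : ∀ k, 0 ≤ M k) (hw : ∀ k, 0 ≤ w k)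
    (ha : ∀ k ≤ n, |a k| ≤ A * M k) (hb : ∀ k ≤ n, |b k| ≤ B * M k) :
    |∑ p ∈ antidiagonal n, w p.1 * (a p.1 * b p.2)| ≤
      A * B * ∑ p ∈ antidiagonal n, w p.1 * (M p.1 * M p.2) := by
  rw [Finset.mul_sum]
  refine (Finset.abs_sum_le_sum_abs _ _).trans (Finset.sum_le_sum fun p hp => ?_)
  rw [abs_mul, abs_mul, abs_of_nonneg (hw _)]
  calc w p.1 * (|a p.1| * |b p.2|) ≤ w p.1 * ((A * M p.1) * (B * M p.2)) := by
        have := ha _ (Finset.HasAntidiagonal.antidiagonal.fst_le hp)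
        have := hb _ (Finset.HasAntidiagonal.antidiagonal.snd_le hp)
        have := hw p.1
        have := hM p.1
        gcongr
    _ = A * B * (w p.1 * (M p.1 * M p.2)) := by ring

theorem abs_coeff_le_of_lt_ten : ∀ k < 10,
    |invCoeff k| ≤ 1 / 60 * (1 / 20 ^ k) ∧ |cotCoeff k| ≤ 1 / 15 * (1 / 20 ^ k) := by
  decide +kernel

theorem abs_coeff_succ_le {n : ℕ} (hn : 9 ≤ n)
    (hv : ∀ k ≤ n, |invCoeff k| ≤ 1 / 60 * majorant k)
    (hu : ∀ k ≤ n, |cotCoeff k| ≤ 1 / 15 * majorant k) :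
    |invCoeff (n + 1)| ≤ 1 / 60 * majorant (n + 1) ∧
      |cotCoeff (n + 1)| ≤ 1 / 15 * majorant (n + 1) := by
  have hn' : (9 : ℚ) ≤ n := mod_cast hn
  have hm := majorant_nonneg (n + 1)
  have hvu : |∑ p ∈ antidiagonal n, (2 * p.1 + 3) * (invCoeff p.1 * cotCoeff p.2)| ≤
      (n + 3) / 45 * majorant (n + 1) := by
    refine (abs_sum_antidiagonal_le (w := fun k => 2 * (k : ℚ) + 3) (by norm_num) majorant_nonneg
      (fun _ => by positivity) hv hu).trans_eq ?_
    rw [sum_antidiagonal_two_mul_fst_add, sum_antidiagonal_majorant]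
    ring
  have hvv : |∑ p ∈ antidiagonal n, invCoeff p.1 * invCoeff p.2| ≤
      1 / 180 * majorant (n + 1) := by
    have h := abs_sum_antidiagonal_le (w := fun _ => 1) (by norm_num) majorant_nonneg
      (fun _ => zero_le_one) hv hv
    simp only [one_mul, sum_antidiagonal_majorant] at h
    linarith
  have hun : |cotCoeff n / (6 * (n + 3))| ≤ 1 / 54 * majorant (n + 1) := by
    rw [abs_div, abs_of_pos (by positivity : (0 : ℚ) < 6 * (n + 3)), div_le_iff₀ (by positivity)]
    nlinarith [hu n le_rfl, majorant_le_succ n]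
  have he : |cotCoeff (n + 1) - 3 * invCoeff (n + 1)| ≤
      (1 / 120 + 1 / 54) * majorant (n + 1) := by
    rw [cotCoeff_succ]
    refine (abs_add_le _ _).trans ?_
    rw [abs_mul, abs_of_pos (by norm_num : (0 : ℚ) < 3 / 2)]
    linarith
  have hstrong : |invCoeff (n + 1)| ≤ 1 / 80 * majorant (n + 1) := by
    refine le_of_mul_le_mul_left ?_ (by positivity : (0 : ℚ) < 2 * n + 7)
    rw [← abs_of_pos (by positivity : (0 : ℚ) < 2 * n + 7), ← abs_mul, invCoeff_succ, abs_neg,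
      abs_of_pos (by positivity : (0 : ℚ) < 2 * n + 7)]
    refine (abs_add_le _ _).trans ?_
    nlinarith
  constructor
  · linarith
  · rw [abs_le] at he hstrong ⊢
    constructor <;> linarith

theorem abs_coeff_le_majorant (n : ℕ) :
    |invCoeff n| ≤ 1 / 60 * majorant n ∧ |cotCoeff n| ≤ 1 / 15 * majorant n := by
  induction n using Nat.strong_induction_on with
  | _ n ih =>
    rcases Nat.lt_or_ge n 10 with hn | hn
    · have h := one_div_twenty_pow_le_majorant n
      obtain ⟨hv, hu⟩ := abs_coeff_le_of_lt_ten n hn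
      constructor <;> linarith
    · obtain ⟨m, rfl⟩ := Nat.exists_eq_add_of_le' (show 1 ≤ n by omega)
      exact abs_coeff_succ_le (by omega) (fun k hk => (ih k (by omega)).1)
        fun k hk => (ih k (by omega)).2

theorem abs_invCoeff_le (n : ℕ) : |(invCoeff n : ℝ)| ≤ 1 / 60 * (1 / 5) ^ n := by
  have h : |invCoeff n| ≤ 1 / 60 * (1 / 5) ^ n := by
    linarith [(abs_coeff_le_majorant n).1, majorant_le_one_fifth_pow n]
  have h' := (Rat.cast_le (K := ℝ)).mpr h
  push_cast at h'
  exact h'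

theorem abs_cotCoeff_le (n : ℕ) : |(cotCoeff n : ℝ)| ≤ 1 / 15 * (1 / 5) ^ n := by
  have h : |cotCoeff n| ≤ 1 / 15 * (1 / 5) ^ n := by
    linarith [(abs_coeff_le_majorant n).2, majorant_le_one_fifth_pow n]
  have h' := (Rat.cast_le (K := ℝ)).mpr h
  push_cast at h'
  exact h'

end Coefficients

section AbsSum

open PowerSeries

/-- The power series `f` converges absolutely at `s`, with sum `y`. -/
def HasAbsSum {R : Type*} [NormedCommRing R] (f : R⟦X⟧) (s y : R) : Prop :=
  (Summable fun n => ‖coeff n f * s ^ n‖) ∧ HasSum (fun n => coeff n f * s ^ n) y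

variable {R : Type*} [NormedCommRing R] {f g : R⟦X⟧} {s y z : R}

theorem HasAbsSum.unique (hy : HasAbsSum f s y) (hz : HasAbsSum f s z) : y = z :=
  hy.2.unique hz.2

theorem HasAbsSum.add (hf : HasAbsSum f s y) (hg : HasAbsSum g s z) :
    HasAbsSum (f + g) s (y + z) := by
  constructor
  · refine (hf.1.add hg.1).of_nonneg_of_le (fun _ => norm_nonneg _) fun n => ?_
    rw [map_add, add_mul]
    exact norm_add_le _ _
  · simpa only [map_add, add_mul] using hf.2.add hg.2

theorem HasAbsSum.mul [CompleteSpace R] (hf : HasAbsSum f s y) (hg : HasAbsSum g s z) :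
    HasAbsSum (f * g) s (y * z) := by
  have hcoeff (n : ℕ) : coeff n (f * g) * s ^ n =
      ∑ p ∈ Finset.HasAntidiagonal.antidiagonal n,
        coeff p.1 f * s ^ p.1 * (coeff p.2 g * s ^ p.2) := by
    rw [coeff_mul, Finset.sum_mul]
    refine Finset.sum_congr rfl fun p hp => ?_
    rw [← Finset.HasAntidiagonal.mem_antidiagonal.mp hp, pow_add]
    ring
  have hsum : Summable fun n => ‖coeff n (f * g) * s ^ n‖ := by
    simpa only [hcoeff] using summable_norm_sum_mul_antidiagonal_of_summable_norm hf.1 hg.1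
  refine ⟨hsum, hsum.of_norm.hasSum_iff.mpr ?_⟩
  simp only [hcoeff]
  rw [← tsum_mul_tsum_eq_tsum_sum_antidiagonal_of_summable_norm hf.1 hg.1,
    hf.2.tsum_eq, hg.2.tsum_eq]

theorem hasAbsSum_monomial (n : ℕ) (a s : R) : HasAbsSum (monomial n a) s (a * s ^ n) := by
  have hne (m : ℕ) (hm : m ≠ n) : coeff m (monomial n a) * s ^ m = 0 := by
    rw [coeff_monomial, if_neg hm, zero_mul]
  constructor
  · refine summable_of_ne_finset_zero (s := {n}) fun m hm => ?_
    rw [hne m (by simpa using hm), norm_zero]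
  · simpa using hasSum_single n hne

theorem hasAbsSum_C (a s : R) : HasAbsSum (C a) s a := by
  simpa using hasAbsSum_monomial 0 a s

theorem hasAbsSum_X (s : R) : HasAbsSum X s s := by
  simpa [X_eq] using hasAbsSum_monomial 1 1 s

end AbsSum

section LacunarySeries

variable {ι : Type*} (a : ι → ℝ) (e : ι → ℕ)

/-- The `j`-th termwise derivative of the series `∑ i, a i * x ^ e i`. -/
noncomputable def seriesDeriv (j : ℕ) (x : ℝ) : ℝ :=
  ∑' i, a i * (e i).descFactorial j * x ^ (e i - j)

variable {a e} {ρ r x : ℝ}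

theorem exists_descFactorial_mul_pow_le (j : ℕ) (hr : 0 < r) (hrρ : r < ρ) :
    ∃ K, ∀ n : ℕ, n.descFactorial j * r ^ (n - j) ≤ K * ρ ^ n := by
  have hρ : 0 < ρ := hr.trans hrρ
  obtain ⟨K, hK⟩ := (tendsto_pow_const_mul_const_pow_of_lt_one j (div_pos hr hρ).le
    ((div_lt_one hρ).mpr hrρ)).bddAbove_range
  refine ⟨K / r ^ j, fun n => ?_⟩
  have hn : n ^ j * (r / ρ) ^ n ≤ K := hK (mem_range_self n)
  rw [div_pow, mul_div_assoc', div_le_iff₀ (by positivity)] at hn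
  rcases lt_or_ge n j with hnj | hnj
  · rw [Nat.descFactorial_of_lt hnj, Nat.cast_zero, zero_mul, div_mul_eq_mul_div]
    exact div_nonneg (le_trans (by positivity) hn) (by positivity)
  · rw [div_mul_eq_mul_div, le_div_iff₀ (by positivity), mul_assoc, ← pow_add,
      Nat.sub_add_cancel hnj]
    refine le_trans ?_ hn
    gcongr
    exact_mod_cast Nat.descFactorial_le_pow n j

theorem summable_seriesDeriv (ha : Summable fun i => |a i| * ρ ^ e i) (j : ℕ) (hr : 0 < r)
    (hrρ : r < ρ) : Summable fun i => |a i| * ((e i).descFactorial j * r ^ (e i - j)) := by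
  obtain ⟨K, hK⟩ := exists_descFactorial_mul_pow_le j hr hrρ
  refine (ha.mul_left K).of_nonneg_of_le (fun i => by positivity) fun i => ?_
  calc |a i| * ((e i).descFactorial j * r ^ (e i - j)) ≤ |a i| * (K * ρ ^ e i) := by
        exact mul_le_mul_of_nonneg_left (hK _) (abs_nonneg _)
    _ = K * (|a i| * ρ ^ e i) := by ring

theorem norm_seriesDeriv_term_le (i : ι) (j : ℕ) (hx : |x| ≤ r) :
    ‖a i * (e i).descFactorial j * x ^ (e i - j)‖ ≤
      |a i| * ((e i).descFactorial j * r ^ (e i - j)) := by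
  rw [Real.norm_eq_abs, abs_mul, abs_mul, Nat.abs_cast, abs_pow, mul_assoc]
  gcongr

theorem hasDerivAt_seriesDeriv (ha : Summable fun i => |a i| * ρ ^ e i) (j : ℕ)
    (hx : |x| < ρ) : HasDerivAt (seriesDeriv a e j) (seriesDeriv a e (j + 1) x) x := by
  obtain ⟨r, hxr, hrρ⟩ := exists_between hx
  have hr : 0 < r := (abs_nonneg x).trans_lt hxr
  refine hasDerivAt_tsum_of_isPreconnected (summable_seriesDeriv ha (j + 1) hr hrρ)
    isOpen_Ioo isPreconnected_Ioo (fun i y _ => ?_)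
    (fun i y hy => norm_seriesDeriv_term_le i (j + 1) (abs_lt.mpr hy).le)
    (y₀ := x) (abs_lt.mp hxr) ?_ (abs_lt.mp hxr)
  · refine ((hasDerivAt_pow (e i - j) y).const_mul _).congr_deriv ?_
    rw [Nat.descFactorial_succ, Nat.sub_sub]
    push_cast
    ring
  · exact (summable_seriesDeriv ha j hr hrρ).of_norm_bounded
      fun i => norm_seriesDeriv_term_le i j hxr.le

theorem contDiffOn_seriesDeriv (ha : Summable fun i => |a i| * ρ ^ e i) (n j : ℕ) :
    ContDiffOn ℝ n (seriesDeriv a e j) (Ioo (-ρ) ρ) := by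
  have hderiv (j : ℕ) {x : ℝ} (hx : x ∈ Ioo (-ρ) ρ) := hasDerivAt_seriesDeriv ha j (abs_lt.mpr hx)
  induction n generalizing j with
  | zero =>
    exact contDiffOn_zero.mpr fun x hx => (hderiv j hx).continuousAt.continuousWithinAt
  | succ n ih =>
    rw [Nat.cast_succ, contDiffOn_succ_iff_deriv_of_isOpen isOpen_Ioo]
    refine ⟨fun x hx => (hderiv j hx).differentiableAt.differentiableWithinAt, by simp, ?_⟩
    exact (ih (j + 1)).congr fun x hx => (hderiv j hx).deriv

theorem iteratedDeriv_seriesDeriv (ha : Summable fun i => |a i| * ρ ^ e i) (n j : ℕ)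
    (hx : |x| < ρ) :
    iteratedDeriv n (seriesDeriv a e j) x = seriesDeriv a e (j + n) x := by
  induction n generalizing x with
  | zero => rfl
  | succ n ih =>
    have hloc : iteratedDeriv n (seriesDeriv a e j) =ᶠ[nhds x] seriesDeriv a e (j + n) := by
      filter_upwards [continuous_abs.continuousAt.eventually_lt_const hx] with y hy using ih hy
    rw [iteratedDeriv_succ, hloc.deriv_eq, (hasDerivAt_seriesDeriv ha (j + n) hx).deriv, add_assoc]

end LacunarySeries

section EvenSeries

open PowerSeries

/-- The power series `g` with `d/dx (x ^ c * f (x²)) = x ^ (c - 1) * g (x²)`. -/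
noncomputable def sqDeriv (c : ℝ) (f : ℝ⟦X⟧) : ℝ⟦X⟧ :=
  mk fun n => (2 * n + c) * coeff n f

variable {f : ℝ⟦X⟧} {M r s x : ℝ}

theorem exists_hasAbsSum_of_abs_coeff_le (hf : ∀ n, |coeff n f| ≤ M * (n + 1) * r ^ n)
    (hrs : ‖r * s‖ < 1) : ∃ y, HasAbsSum f s y := by
  suffices hsum : Summable fun n => ‖coeff n f * s ^ n‖ from ⟨_, hsum, hsum.of_norm.hasSum⟩
  have hgeom : Summable fun n : ℕ => ‖((n : ℝ) + 1) * (r * s) ^ n‖ := by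
    simpa only [add_mul, pow_one, one_mul] using
      ((summable_pow_mul_geometric_of_norm_lt_one 1 hrs).add
        (summable_geometric_of_norm_lt_one hrs)).norm
  refine (hgeom.mul_left |M|).of_nonneg_of_le (fun _ => norm_nonneg _) fun n => ?_
  calc ‖coeff n f * s ^ n‖ ≤ |M * (n + 1) * r ^ n| * |s ^ n| := by
        rw [Real.norm_eq_abs, abs_mul]
        exact mul_le_mul_of_nonneg_right ((hf n).trans (le_abs_self _)) (abs_nonneg _)
    _ = |M| * ‖((n : ℝ) + 1) * (r * s) ^ n‖ := by
        rw [Real.norm_eq_abs, ← abs_mul, ← abs_mul, mul_pow]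
        ring_nf

theorem exists_hasAbsSum_seriesDeriv (hf : ∀ n, |coeff n f| ≤ M * r ^ n) (hr : 0 ≤ r) (c : ℕ)
    (hrx : r * x ^ 2 < 1) :
    ∃ y y', HasAbsSum f (x ^ 2) y ∧ HasAbsSum (sqDeriv (c + 1) f) (x ^ 2) y' ∧
      seriesDeriv (fun n => coeff n f) (fun n => 2 * n + (c + 1)) 0 x = x ^ (c + 1) * y ∧
      seriesDeriv (fun n => coeff n f) (fun n => 2 * n + (c + 1)) 1 x = x ^ c * y' := by
  have hrx' : ‖r * x ^ 2‖ < 1 := by rwa [Real.norm_of_nonneg (by positivity)]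
  have hM (n : ℕ) : 0 ≤ M * r ^ n := (abs_nonneg _).trans (hf n)
  obtain ⟨y, hy⟩ := exists_hasAbsSum_of_abs_coeff_le (M := M) (fun n => by
    nlinarith [hf n, hM n, (Nat.cast_nonneg n : (0 : ℝ) ≤ n)]) hrx'
  obtain ⟨y', hy'⟩ := exists_hasAbsSum_of_abs_coeff_le (f := sqDeriv (c + 1) f)
    (M := (c + 3) * M) (fun n => by
      rw [sqDeriv, coeff_mk, abs_mul, abs_of_nonneg (by positivity)]
      calc (2 * n + (c + 1 : ℝ)) * |coeff n f| ≤ ((c + 3) * (n + 1)) * (M * r ^ n) := by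
            have : (0 : ℝ) ≤ c * n := by positivity
            gcongr
            · nlinarith
            · exact hf n
        _ = (c + 3) * M * (n + 1) * r ^ n := by ring) hrx'
  refine ⟨y, y', hy, hy', ?_, ?_⟩
  · rw [seriesDeriv, ← hy.2.tsum_eq, ← tsum_mul_left]
    refine tsum_congr fun n => ?_
    rw [Nat.descFactorial_zero, Nat.sub_zero, pow_add, pow_mul]
    push_cast
    ring
  · rw [seriesDeriv, ← hy'.2.tsum_eq, ← tsum_mul_left]
    refine tsum_congr fun n => ?_
    rw [Nat.descFactorial_one, sqDeriv, coeff_mk, ← add_assoc, Nat.add_sub_cancel, pow_add, pow_mul]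
    push_cast
    ring

end EvenSeries

section Inverse

open PowerSeries

/-- The power series `V` with `t = x + x³ V(x²)`. -/
noncomputable def invPowerSeries : ℝ⟦X⟧ := mk fun n => (invCoeff n : ℝ)

/-- The power series `U` with `3 (1 - t cot t) = x² + x⁴ U(x²)`. -/
noncomputable def cotPowerSeries : ℝ⟦X⟧ := mk fun n => (cotCoeff n : ℝ)

theorem abs_coeff_invPowerSeries_le (n : ℕ) :
    |coeff n invPowerSeries| ≤ 1 / 60 * (1 / 5) ^ n := by
  rw [invPowerSeries, coeff_mk]
  exact abs_invCoeff_le n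

theorem abs_coeff_cotPowerSeries_le (n : ℕ) :
    |coeff n cotPowerSeries| ≤ 1 / 15 * (1 / 5) ^ n := by
  rw [cotPowerSeries, coeff_mk]
  exact abs_cotCoeff_le n

theorem invPowerSeries_eq :
    invPowerSeries = cotPowerSeries + sqDeriv 3 invPowerSeries +
      X * (cotPowerSeries * sqDeriv 3 invPowerSeries) := by
  ext n
  cases n with
  | zero =>
    simp only [map_add, coeff_zero_X_mul, sqDeriv, invPowerSeries, cotPowerSeries, coeff_mk,
      invCoeff_zero, cotCoeff_zero]
    norm_num
  | succ n =>
    have h := congrArg (Rat.cast : ℚ → ℝ) (invCoeff_succ n)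
    push_cast at h
    simp only [map_add, coeff_succ_X_mul, mul_comm cotPowerSeries]
    simp only [coeff_mul, sqDeriv, invPowerSeries, cotPowerSeries, coeff_mk, mul_assoc]
    push_cast
    linear_combination -h

theorem sqDeriv_cotPowerSeries :
    sqDeriv 4 cotPowerSeries =
      C 3 * (invPowerSeries + sqDeriv 3 invPowerSeries +
        X * (sqDeriv 3 invPowerSeries * invPowerSeries)) +
      C (1 / 3) * (C 1 + X * cotPowerSeries) := by
  ext n
  cases n with
  | zero =>
    simp only [map_add, coeff_C_mul, coeff_zero_X_mul, coeff_zero_C, sqDeriv, invPowerSeries,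
      cotPowerSeries, coeff_mk, invCoeff_zero, cotCoeff_zero]
    norm_num
  | succ n =>
    have h := congrArg (Rat.cast : ℚ → ℝ) (cotCoeff_succ n)
    push_cast at h
    have hsymm := sum_antidiagonal_two_mul_fst_add (fun k => (invCoeff k : ℝ)) 3 n
    have hn : (n : ℝ) + 3 ≠ 0 := by positivity
    simp only [map_add, coeff_C_mul, coeff_succ_X_mul, coeff_succ_C]
    simp only [coeff_mul, sqDeriv, invPowerSeries, cotPowerSeries, coeff_mk, mul_assoc, hsymm]
    push_cast
    field_simp at h ⊢
    linear_combination h / 2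

/-- The inverse of `xfun` near the origin, as a power series. -/
noncomputable def invSeries (x : ℝ) : ℝ :=
  x + seriesDeriv (fun n => coeff n invPowerSeries) (fun n => 2 * n + 3) 0 x

/-- The function `3 (1 - t cot t)` of `x`, as a power series. -/
noncomputable def cotSeries (x : ℝ) : ℝ :=
  x ^ 2 + seriesDeriv (fun n => coeff n cotPowerSeries) (fun n => 2 * n + 4) 0 x

theorem summable_abs_mul_two_pow {f : ℝ⟦X⟧} {M : ℝ} (hf : ∀ n, |coeff n f| ≤ M * (1 / 5) ^ n)
    (c : ℕ) : Summable fun n => |coeff n f| * 2 ^ (2 * n + c) := by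
  have hgeom : Summable fun n : ℕ => M * 2 ^ c * (4 / 5 : ℝ) ^ n :=
    (summable_geometric_of_lt_one (by norm_num) (by norm_num)).mul_left _
  refine hgeom.of_nonneg_of_le (fun n => by positivity) fun n => ?_
  calc |coeff n f| * 2 ^ (2 * n + c) ≤ M * (1 / 5) ^ n * 2 ^ (2 * n + c) := by
        gcongr
        exact hf n
    _ = M * 2 ^ c * (4 / 5 : ℝ) ^ n := by
        rw [show (4 / 5 : ℝ) = 1 / 5 * 2 ^ 2 by norm_num, mul_pow, ← pow_mul, pow_add]
        ring

theorem one_fifth_mul_sq_lt_one {x : ℝ} (hx : |x| < 2) : 1 / 5 * x ^ 2 < 1 := by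
  nlinarith [sq_lt_sq.mpr (hx.trans_eq (abs_two).symm)]

theorem exists_hasDerivAt_invSeries_cotSeries {x : ℝ} (hx : |x| < 2) :
    ∃ t' c', HasDerivAt invSeries t' x ∧ HasDerivAt cotSeries c' x ∧
      cotSeries x * t' = x * invSeries x ∧
      3 * invSeries x * t' = c' + x - x * cotSeries x / 3 := by
  have hx5 := one_fifth_mul_sq_lt_one hx
  obtain ⟨v, v', hv, hv', ht, ht'⟩ :=
    exists_hasAbsSum_seriesDeriv abs_coeff_invPowerSeries_le (by norm_num) 2 hx5
  obtain ⟨u, u', hu, hu', hc, hc'⟩ :=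
    exists_hasAbsSum_seriesDeriv abs_coeff_cotPowerSeries_le (by norm_num) 3 hx5
  norm_num1 at hv' hu' ht ht' hc hc'
  have hX := hasAbsSum_X (x ^ 2)
  have hinv : v = u + v' + x ^ 2 * (u * v') := by
    refine hv.unique ?_
    rw [invPowerSeries_eq]
    exact (hu.add hv').add (hX.mul (hu.mul hv'))
  have hcot : u' = 3 * (v + v' + x ^ 2 * (v' * v)) + 1 / 3 * (1 + x ^ 2 * u) := by
    refine hu'.unique ?_
    rw [sqDeriv_cotPowerSeries]
    exact ((hasAbsSum_C 3 _).mul ((hv.add hv').add (hX.mul (hv'.mul hv)))).add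
      ((hasAbsSum_C (1 / 3) _).mul ((hasAbsSum_C 1 _).add (hX.mul hu)))
  have dt := (hasDerivAt_id x).add
    (hasDerivAt_seriesDeriv (summable_abs_mul_two_pow abs_coeff_invPowerSeries_le 3) 0 hx)
  have dc := (hasDerivAt_pow 2 x).add
    (hasDerivAt_seriesDeriv (summable_abs_mul_two_pow abs_coeff_cotPowerSeries_le 4) 0 hx)
  refine ⟨_, _, dt, dc, ?_, ?_⟩
  · rw [invSeries, cotSeries, ht, hc, ht']
    linear_combination -x ^ 4 * hinv
  · rw [invSeries, cotSeries, ht, hc, ht', hc']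
    push_cast
    linear_combination -x ^ 3 * hcot

theorem invSeries_zero : invSeries 0 = 0 := by
  simp [invSeries, seriesDeriv]

theorem cotSeries_zero : cotSeries 0 = 0 := by
  simp [cotSeries, seriesDeriv]

/-- Both differential equations are the real and imaginary parts of `g' = (x / 3 + i t') g` for
`g = 1 - c / 3 + i t`. -/
theorem cexp_sq_add_invSeries_mul_I {x : ℝ} (hx : |x| < 2) :
    Complex.exp (x ^ 2 / 6 + invSeries x * Complex.I) =
      1 - cotSeries x / 3 + invSeries x * Complex.I := by
  let h : ℝ → ℂ := fun y => y ^ 2 / 6 + invSeries y * Complex.I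
  let g : ℝ → ℂ := fun y => 1 - cotSeries y / 3 + invSeries y * Complex.I
  have hderiv : ∀ y ∈ Ioo (-2 : ℝ) 2, HasDerivAt (fun y => g y * Complex.exp (-h y)) 0 y := by
    intro y hy
    obtain ⟨t', c', dt, dc, hct, htt⟩ := exists_hasDerivAt_invSeries_cotSeries (abs_lt.mpr hy)
    have hct' := congrArg (Complex.ofReal) hct
    have htt' := congrArg (Complex.ofReal) htt
    push_cast at hct' htt'
    have dtI := dt.ofReal_comp.mul_const Complex.I
    have dh : HasDerivAt h (y / 3 + t' * Complex.I) y := by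
      refine ((((hasDerivAt_id y).ofReal_comp.pow 2).div_const 6).add dtI).congr_deriv ?_
      simp only [Nat.cast_ofNat, id_eq, Nat.add_one_sub_one, pow_one, Complex.ofReal_one, mul_one]
      ring
    have dg : HasDerivAt g (-c' / 3 + t' * Complex.I) y := by
      refine (((dc.ofReal_comp.div_const 3).const_sub 1).add dtI).congr_deriv ?_
      ring
    refine (dg.mul dh.neg.cexp).congr_deriv ?_
    linear_combination Complex.exp (-h y) * (Complex.I / 3 * hct' + htt' / 3
      - invSeries y * t' * Complex.I_sq)
  have hconst := isOpen_Ioo.is_const_of_deriv_eq_zero isPreconnected_Ioo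
    (fun y hy => (hderiv y hy).differentiableAt.differentiableWithinAt)
    (fun y hy => (hderiv y hy).deriv) (abs_lt.mp hx) (show (0 : ℝ) ∈ Ioo (-2 : ℝ) 2 by norm_num)
  have hone : g x * Complex.exp (-h x) = 1 := by
    simpa [g, h, invSeries_zero, cotSeries_zero] using hconst
  rw [Complex.exp_neg] at hone
  exact (eq_of_div_eq_one hone).symm

theorem exp_mul_sin_invSeries {x : ℝ} (hx : |x| < 2) :
    exp (x ^ 2 / 6) * sin (invSeries x) = invSeries x := by
  have h := congrArg Complex.im (cexp_sq_add_invSeries_mul_I hx)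
  rw [Complex.exp_im] at h
  simpa [← Complex.ofReal_pow] using h

theorem invSeries_pos {x : ℝ} (hx : x ∈ Ioo (0 : ℝ) 2) : 0 < invSeries x := by
  have hx2 : |x| < 2 := abs_lt.mpr ⟨by linarith [hx.1], hx.2⟩
  obtain ⟨v, -, hv, -, ht, -⟩ := exists_hasAbsSum_seriesDeriv abs_coeff_invPowerSeries_le
    (by norm_num) 2 (one_fifth_mul_sq_lt_one hx2)
  have hx4 : x ^ 2 < 4 := by nlinarith [hx.1, hx.2]
  have hgeom : HasSum (fun n : ℕ => 1 / 60 * (4 / 5 : ℝ) ^ n) (1 / 60 * (1 - 4 / 5)⁻¹) :=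
    (hasSum_geometric_of_lt_one (by norm_num) (by norm_num)).mul_left _
  have hvle : |v| ≤ 1 / 60 * (1 - 4 / 5)⁻¹ := by
    rw [← hv.2.tsum_eq, ← Real.norm_eq_abs]
    refine tsum_of_norm_bounded hgeom fun n => ?_
    rw [Real.norm_eq_abs, abs_mul, abs_of_nonneg (by positivity : 0 ≤ (x ^ 2) ^ n)]
    calc |coeff n invPowerSeries| * (x ^ 2) ^ n ≤ 1 / 60 * (1 / 5) ^ n * 4 ^ n := by
          gcongr
          exact abs_coeff_invPowerSeries_le n
      _ = 1 / 60 * (4 / 5) ^ n := by rw [mul_assoc, ← mul_pow]; norm_num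
  have hfactor : invSeries x = x * (1 + x ^ 2 * v) := by
    rw [invSeries, ht]
    ring
  rw [hfactor]
  refine mul_pos hx.1 ?_
  norm_num [abs_le] at hvle
  nlinarith [sq_nonneg x]

theorem xfun_invSeries {x : ℝ} (hx : x ∈ Ico (0 : ℝ) 2) : xfun (invSeries x) = x := by
  rcases hx.1.eq_or_lt with rfl | hx0
  · simp [invSeries_zero, xfun]
  · have ht := invSeries_pos ⟨hx0, hx.2⟩
    have hsin : sin (invSeries x) / invSeries x = exp (-(x ^ 2 / 6)) := by
      rw [exp_neg, div_eq_iff ht.ne', ← div_eq_inv_mul, eq_div_iff (exp_pos _).ne', mul_comm]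
      exact exp_mul_sin_invSeries (abs_lt.mpr ⟨by linarith, hx.2⟩)
    rw [xfun, if_neg ht.ne', hsin, log_exp, show -6 * -(x ^ 2 / 6) = x ^ 2 by ring, sqrt_sq hx.1]

end Inverse

section SeventhDerivative

open PowerSeries

theorem sum_seventh_deriv_coeff_le : ∑ n ∈ Finset.range 17,
    |invCoeff n| * (2 * n + 3).descFactorial 7 * (13 / 10) ^ (n - 2) ≤ 1 / 10 := by
  decide +kernel

theorem descFactorial_add_two (n k : ℕ) :
    (n + 2).descFactorial (k + 2) * ((n - k) * (n - (k + 1))) =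
      (n + 2) * (n + 1) * n.descFactorial (k + 2) := by
  rw [Nat.succ_descFactorial_succ, Nat.succ_descFactorial_succ, Nat.descFactorial_succ n (k + 1),
    Nat.descFactorial_succ n k]
  ring

theorem descFactorial_seven_succ_le {n : ℕ} (hn : 17 ≤ n) :
    ((2 * (n + 1) + 3).descFactorial 7 : ℝ) * (13 / 50) ≤
      1 / 2 * ((2 * n + 3).descFactorial 7 : ℝ) := by
  have hn' : (17 : ℝ) ≤ n := mod_cast hn
  have hrec : ((2 * (n + 1) + 3).descFactorial 7 : ℝ) * ((2 * n - 2) * (2 * n - 3)) =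
      (2 * n + 5) * (2 * n + 4) * ((2 * n + 3).descFactorial 7 : ℝ) := by
    have h := congrArg (Nat.cast : ℕ → ℝ) (descFactorial_add_two (2 * n + 3) 5)
    push_cast [show 2 ≤ 2 * n by omega, show 3 ≤ 2 * n by omega] at h
    rw [show 2 * (n + 1) + 3 = 2 * n + 3 + 2 by ring]
    linear_combination h
  have hratio : (2 * n + 5) * (2 * n + 4) * (13 / 50) ≤
      1 / 2 * ((2 * n - 2) * (2 * n - 3) : ℝ) := by
    nlinarith
  refine le_of_mul_le_mul_right ?_ (show (0 : ℝ) < (2 * n - 2) * (2 * n - 3) by nlinarith)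
  rw [mul_right_comm, hrec]
  linarith [mul_le_mul_of_nonneg_right hratio ((2 * n + 3).descFactorial 7).cast_nonneg]

theorem descFactorial_seven_mul_pow_le {n : ℕ} (hn : 17 ≤ n) :
    ((2 * n + 3).descFactorial 7 : ℝ) * (13 / 50) ^ n ≤ 6 * (1 / 2) ^ (n - 17) := by
  induction n, hn using Nat.le_induction with
  | base => norm_num [Nat.descFactorial]
  | succ n hn ih =>
    calc ((2 * (n + 1) + 3).descFactorial 7 : ℝ) * (13 / 50) ^ (n + 1)
        = ((2 * (n + 1) + 3).descFactorial 7 : ℝ) * (13 / 50) * (13 / 50) ^ n := by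
          rw [pow_succ', mul_assoc]
      _ ≤ 1 / 2 * ((2 * n + 3).descFactorial 7 : ℝ) * (13 / 50) ^ n :=
          mul_le_mul_of_nonneg_right (descFactorial_seven_succ_le hn) (by positivity)
      _ ≤ 1 / 2 * (6 * (1 / 2) ^ (n - 17)) := by
          rw [mul_assoc]
          exact mul_le_mul_of_nonneg_left ih (by norm_num)
      _ = 6 * (1 / 2) ^ (n + 1 - 17) := by
          rw [Nat.succ_sub hn, pow_succ]
          ring

/-- The `n`-th term of the series bounding the seventh derivative on `x² ≤ 13 / 10`. -/
noncomputable def seventhMajorant (n : ℕ) : ℝ :=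
  |(invCoeff n : ℝ)| * ((2 * n + 3).descFactorial 7 : ℝ) * (13 / 10) ^ (n - 2)

theorem seventhMajorant_nonneg (n : ℕ) : 0 ≤ seventhMajorant n := by
  unfold seventhMajorant
  positivity

theorem seventhMajorant_le {n : ℕ} (hn : 17 ≤ n) :
    seventhMajorant n ≤ 1 / 10 * (1 / 2) ^ (n - 17) := by
  have hpow : (13 / 10 : ℝ) ^ (n - 2) ≤ (13 / 10) ^ n :=
    pow_le_pow_right₀ (by norm_num) (Nat.sub_le _ _)
  calc seventhMajorant n
      ≤ 1 / 60 * (1 / 5) ^ n * ((2 * n + 3).descFactorial 7 : ℝ) * (13 / 10) ^ n := by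
        unfold seventhMajorant
        gcongr
        exact abs_invCoeff_le n
    _ = 1 / 60 * (((2 * n + 3).descFactorial 7 : ℝ) * (13 / 50) ^ n) := by
        rw [show (13 / 50 : ℝ) = 1 / 5 * (13 / 10) by norm_num, mul_pow]
        ring
    _ ≤ 1 / 60 * (6 * (1 / 2) ^ (n - 17)) :=
        mul_le_mul_of_nonneg_left (descFactorial_seven_mul_pow_le hn) (by norm_num)
    _ = 1 / 10 * (1 / 2) ^ (n - 17) := by ring

theorem exists_hasSum_seventhMajorant : ∃ S ≤ 3 / 10, HasSum seventhMajorant S := by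
  have hgeom : HasSum (fun i : ℕ => 1 / 10 * (1 / 2 : ℝ) ^ i) (1 / 10 * 2) :=
    hasSum_geometric_two.mul_left _
  have hle (i : ℕ) : seventhMajorant (i + 17) ≤ 1 / 10 * (1 / 2) ^ i :=
    (seventhMajorant_le (Nat.le_add_left 17 i)).trans_eq (by rw [Nat.add_sub_cancel])
  have htail := hgeom.summable.of_nonneg_of_le (fun i => seventhMajorant_nonneg (i + 17)) hle
  have hsum := (summable_nat_add_iff 17).mp htail
  refine ⟨_, ?_, hsum.hasSum⟩
  have hhead : ∑ n ∈ Finset.range 17, seventhMajorant n ≤ 1 / 10 := by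
    have h := (Rat.cast_le (K := ℝ)).mpr sum_seventh_deriv_coeff_le
    push_cast at h
    exact h
  rw [← hsum.sum_add_tsum_nat_add 17]
  linarith [hasSum_le hle htail.hasSum hgeom]

theorem iteratedDeriv_seven_invSeries {x : ℝ} (hx : |x| < 2) :
    iteratedDeriv 7 invSeries x =
      seriesDeriv (fun n => coeff n invPowerSeries) (fun n => 2 * n + 3) 7 x := by
  have hsum := summable_abs_mul_two_pow abs_coeff_invPowerSeries_le 3
  have hcd : ContDiffAt ℝ 7 (seriesDeriv (fun n => coeff n invPowerSeries)
      (fun n => 2 * n + 3) 0) x :=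
    (contDiffOn_seriesDeriv hsum 7 0).contDiffAt (isOpen_Ioo.mem_nhds (abs_lt.mp hx))
  have hadd := iteratedDeriv_fun_add (n := 7) (contDiffAt_id (𝕜 := ℝ) (x := x)) hcd
  rw [iteratedDeriv_seriesDeriv hsum 7 0 hx] at hadd
  refine hadd.trans ?_
  simp [iteratedDeriv_id]

theorem contDiffOn_invSeries (n : ℕ) : ContDiffOn ℝ n invSeries (Ioo (-2) 2) :=
  contDiffOn_id.add
    (contDiffOn_seriesDeriv (summable_abs_mul_two_pow abs_coeff_invPowerSeries_le 3) n 0)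

theorem abs_iteratedDeriv_seven_invSeries_le {x : ℝ} (hx : x ^ 2 ≤ 13 / 10) :
    |iteratedDeriv 7 invSeries x| ≤ 0.50344 := by
  have hx2 : |x| < 2 := abs_lt_of_sq_lt_sq (by linarith) (by norm_num)
  obtain ⟨S, hS, hsum⟩ := exists_hasSum_seventhMajorant
  rw [iteratedDeriv_seven_invSeries hx2, ← Real.norm_eq_abs]
  refine (tsum_of_norm_bounded hsum fun n => ?_).trans (hS.trans (by norm_num))
  simp only [invPowerSeries, coeff_mk]
  rw [seventhMajorant, Real.norm_eq_abs, abs_mul, abs_mul, Nat.abs_cast]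
  rcases Nat.lt_or_ge n 2 with hn | hn
  · rw [Nat.descFactorial_of_lt (by omega), Nat.cast_zero, mul_zero, zero_mul, zero_mul]
  · rw [show 2 * n + 3 - 7 = 2 * (n - 2) by omega, pow_mul, abs_pow, abs_sq]
    gcongr

end SeventhDerivative

section Range

theorem le_sin_eleven_tenths : 0.886 ≤ sin 1.1 := by
  have hsin : 0.522 ≤ sin 0.55 := by
    linarith [sin_ge_sub_cube (x := 0.55) (by norm_num)]
  have hcos : 0.8487 ≤ cos 0.55 := by
    linarith [one_sub_sq_div_two_le_cos (x := 0.55)]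
  rw [show (1.1 : ℝ) = 2 * 0.55 by norm_num, sin_two_mul]
  nlinarith

theorem xfun_pos {t : ℝ} (ht : t ∈ Ioo 0 π) : 0 < xfun t := by
  rw [xfun, if_neg ht.1.ne', sqrt_pos]
  have hlt : sin t / t < 1 := (div_lt_one ht.1).mpr (sin_lt ht.1)
  linarith [log_neg (div_pos (sin_pos_of_mem_Ioo ht) ht.1) hlt]

theorem xfun_eleven_tenths_le : xfun 1.1 ≤ √(13 / 10) := by
  have hexp : 1.2418 ≤ exp (13 / 60) := by
    refine le_trans ?_ (sum_le_exp_of_nonneg (by norm_num : (0 : ℝ) ≤ 13 / 60) 4)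
    norm_num [Finset.sum_range_succ, Nat.factorial]
  have hsin : 0.8054 ≤ sin 1.1 / 1.1 := by
    rw [le_div_iff₀ (by norm_num)]
    linarith [le_sin_eleven_tenths]
  have hlog : -(13 / 60) ≤ log (sin 1.1 / 1.1) := by
    rw [le_log_iff_exp_le (by linarith), exp_neg]
    exact (inv_anti₀ (by norm_num) hexp).trans (le_trans (by norm_num) hsin)
  rw [xfun, if_neg (by norm_num)]
  exact sqrt_le_sqrt (by linarith)

theorem invSeries_mem_Icc {t x : ℝ} (ht : 0 ≤ t) (htx : xfun t < 2) (hx : x ∈ Icc 0 (xfun t)) :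
    invSeries x ∈ Icc 0 t := by
  have hx2 : x ∈ Ico (0 : ℝ) 2 := ⟨hx.1, hx.2.trans_lt htx⟩
  constructor
  · rcases hx.1.eq_or_lt with rfl | hx0
    · rw [invSeries_zero]
    · exact (invSeries_pos ⟨hx0, hx2.2⟩).le
  · by_contra! hlt
    have hcont : ContinuousOn invSeries (Icc 0 x) :=
      (contDiffOn_invSeries 0).continuousOn.mono fun y hy =>
        ⟨by linarith [hy.1], hy.2.trans_lt hx2.2⟩
    obtain ⟨z, hz, rfl⟩ := intermediate_value_Ico hx.1 hcont
      (show t ∈ Ico (invSeries 0) (invSeries x) from ⟨invSeries_zero.trans_le ht, hlt⟩)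
    rw [xfun_invSeries ⟨hz.1, hz.2.trans hx2.2⟩] at hx
    exact hz.2.not_ge hx.2

end Range

/-- If `tf` is the inverse of `x(t)` on `[0, 1.1]`, then `tf` is seven times
differentiable on `[0, x(1.1)]` and its seventh derivative is bounded by `0.50344`. -/
theorem inverse_seventh_deriv_bound (tf : ℝ → ℝ)
    (hmaps : MapsTo tf (Icc 0 (xfun 1.1)) (Icc (0 : ℝ) 1.1))
    (hleft : ∀ t ∈ Icc (0 : ℝ) 1.1, tf (xfun t) = t)
    (hright : ∀ y ∈ Icc 0 (xfun 1.1), xfun (tf y) = y) :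
    ContDiffOn ℝ 7 tf (Icc 0 (xfun 1.1)) ∧
    ∀ y ∈ Icc 0 (xfun 1.1),
      |iteratedDerivWithin 7 tf (Icc 0 (xfun 1.1)) y| ≤ 0.50344 := by
  have hpos : 0 < xfun 1.1 := xfun_pos ⟨by norm_num, by linarith [pi_gt_three]⟩
  have hlt : xfun 1.1 < 2 := xfun_eleven_tenths_le.trans_lt (by
    rw [sqrt_lt' (by norm_num)]
    norm_num)
  have hsub : Icc 0 (xfun 1.1) ⊆ Ioo (-2) 2 :=
    fun y hy => ⟨by linarith [hy.1], hy.2.trans_lt hlt⟩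
  have heq : EqOn tf invSeries (Icc 0 (xfun 1.1)) := fun y hy => by
    have h := hleft _ (invSeries_mem_Icc (by norm_num) hlt hy)
    rwa [xfun_invSeries ⟨hy.1, (hsub hy).2⟩] at h
  have hcd := contDiffOn_invSeries 7
  refine ⟨(hcd.mono hsub).congr heq, fun y hy => ?_⟩
  rw [iteratedDerivWithin_congr heq hy, iteratedDerivWithin_eq_iteratedDeriv
    (uniqueDiffOn_Icc hpos) (hcd.contDiffAt (isOpen_Ioo.mem_nhds (hsub hy))) hy]
  refine abs_iteratedDeriv_seven_invSeries_le ?_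
  exact (le_sqrt hy.1 (by norm_num)).mp (hy.2.trans xfun_eleven_tenths_le)
end
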